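/- As formal power series in q and Laurent polynomials in z, S̄B(z,q) := ∑_{n≥1} q^{2n} (-q^{2n+1};q)_∞ (q^{2n+1};q)_∞ / ((z q^{2n}; q^2)_∞ (z^{-1} q^{2n}; q^2)_∞ (q^{2n+1}; q^2)_∞^2) equals [R2(z,q) - C2(z,q)] / ((1-z)(1-z^{-1})), where R2(z,q) = ((-q;q)_∞/(q;q)_∞)(1 + 2∑_{n≥1} (1-z)(1-z^{-1})(-1)^n q^{n^2+2n} / ((1-z q^{2n})(1-z^{-1} q^{2n}))) and C2(z,q) = (-q;q)_∞ (q^2;q^2)_∞ / ((q;q^2)_∞ (z q^2;q^2)_∞ (z^{-1} q^2;q^2)_∞). -/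

import Mathlib

/-- The infinite q-Pochhammer symbol `(a; q)_∞ = ∏_{j ≥ 0} (1 - a q^j)`. -/
noncomputable def qPochInf (a q : ℂ) : ℂ := ∏' j : ℕ, (1 - a * q ^ j)

/-- The finite q-Pochhammer symbol `(a; q)_n = ∏_{j = 0}^{n-1} (1 - a q^j)`. -/
noncomputable def qPoch (a q : ℂ) (n : ℕ) : ℂ := ∏ j ∈ Finset.range n, (1 - a * q ^ j)

/-- The two-variable spt2bar crank generating function
`S̄B(z,q) = ∑_{n≥1} q^{2n}(-q^{2n+1};q)_∞(q^{2n+1};q)_∞ /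
  ((zq^{2n};q^2)_∞ (z⁻¹q^{2n};q^2)_∞ (q^{2n+1};q^2)_∞^2)`. -/
noncomputable def SB (z q : ℂ) : ℂ :=
  ∑' n : ℕ,
    q ^ (2 * (n + 1)) * qPochInf (-q ^ (2 * (n + 1) + 1)) q *
        qPochInf (q ^ (2 * (n + 1) + 1)) q /
      (qPochInf (z * q ^ (2 * (n + 1))) (q ^ 2) *
        qPochInf (z⁻¹ * q ^ (2 * (n + 1))) (q ^ 2) *
        qPochInf (q ^ (2 * (n + 1) + 1)) (q ^ 2) ^ 2)

/-- The M2-rank generating function for overpartitions. -/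
noncomputable def R2 (z q : ℂ) : ℂ :=
  qPochInf (-q) q / qPochInf q q *
    (1 + 2 * ∑' n : ℕ,
      (1 - z) * (1 - z⁻¹) * (-1) ^ (n + 1) * q ^ ((n + 1) ^ 2 + 2 * (n + 1)) /
        ((1 - z * q ^ (2 * (n + 1))) * (1 - z⁻¹ * q ^ (2 * (n + 1)))))

/-- The residual M2-crank generating function for overpartitions. -/
noncomputable def C2 (z q : ℂ) : ℂ :=
  qPochInf (-q) q * qPochInf (q ^ 2) (q ^ 2) /
    (qPochInf q (q ^ 2) * qPochInf (z * q ^ 2) (q ^ 2) * qPochInf (z⁻¹ * q ^ 2) (q ^ 2))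

/-!
Write `p = q²`. Up to the factor `C2 / ((1 - z)(1 - z⁻¹))`, the `n`-th summand of `SB` is
`(z;p)_n (z⁻¹;p)_n pⁿ β_n` with `β_n = (q;p)_n² / (p;p)_{2n}`. By the finite Jacobi triple product,
`β_n = ∑_r α_r / ((p;p)_{n-r} (p;p)_{n+r})` with `α_r = (-1)^r q^{r²}`, so Bailey's lemma with
parameters `z`, `z⁻¹` turns the sum over all `n ≥ 0` into the bilateral series behind `R2`, that is,
into `R2 / C2`. The sum defining `SB` lacks the term `n = 0`, which accounts for `-C2`.
-/

open Filter Topology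

section Pochhammer

variable {a p q : ℂ}

lemma qPoch_zero (a p : ℂ) : qPoch a p 0 = 1 := by simp [qPoch]

lemma qPoch_succ (a p : ℂ) (n : ℕ) : qPoch a p (n + 1) = qPoch a p n * (1 - a * p ^ n) :=
  Finset.prod_range_succ _ n

lemma qPoch_succ' (a p : ℂ) (n : ℕ) : qPoch a p (n + 1) = (1 - a) * qPoch (a * p) p n := by
  simp only [qPoch, Finset.prod_range_succ', pow_zero, mul_one, pow_succ', mul_assoc]
  exact mul_comm _ _

lemma qPoch_ne_zero (h : ∀ j : ℕ, a * p ^ j ≠ 1) (n : ℕ) : qPoch a p n ≠ 0 :=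
  Finset.prod_ne_zero_iff.mpr fun j _ => sub_ne_zero.mpr (h j).symm

lemma mul_pow_ne_one_of_norm_lt_one (ha : ‖a‖ < 1) (hp : ‖p‖ < 1) (j : ℕ) : a * p ^ j ≠ 1 := by
  refine fun h => (norm_one (α := ℂ)).not_lt ?_
  rw [← h, norm_mul, norm_pow]
  exact mul_lt_one_of_nonneg_of_lt_one_left (norm_nonneg a) ha
    (pow_le_one₀ (norm_nonneg p) hp.le)

lemma norm_sq_lt_one (hq : ‖q‖ < 1) : ‖q ^ 2‖ < 1 := by
  simpa only [norm_pow] using pow_lt_one₀ (norm_nonneg q) hq two_ne_zero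

lemma summable_norm_neg_mul_pow (a : ℂ) (hp : ‖p‖ < 1) :
    Summable fun j : ℕ => ‖-(a * p ^ j)‖ := by
  simpa only [norm_neg, norm_mul, norm_pow] using
    (summable_geometric_of_lt_one (norm_nonneg p) hp).mul_left ‖a‖

lemma multipliable_one_sub_mul_pow (a : ℂ) (hp : ‖p‖ < 1) :
    Multipliable fun j : ℕ => 1 - a * p ^ j := by
  simpa only [sub_eq_add_neg] using
    multipliable_one_add_of_summable (summable_norm_neg_mul_pow a hp)

lemma qPochInf_ne_zero (hp : ‖p‖ < 1) (h : ∀ j : ℕ, a * p ^ j ≠ 1) : qPochInf a p ≠ 0 := by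
  simpa only [qPochInf, sub_eq_add_neg] using
    tprod_one_add_ne_zero_of_summable (f := fun j : ℕ => -(a * p ^ j))
      (fun j => by simpa only [← sub_eq_add_neg] using sub_ne_zero.mpr (h j).symm)
      (summable_norm_neg_mul_pow a hp)

lemma qPochInf_self_ne_zero (hp : ‖p‖ < 1) : qPochInf p p ≠ 0 :=
  qPochInf_ne_zero hp (mul_pow_ne_one_of_norm_lt_one hp hp)

lemma tendsto_qPoch (a : ℂ) (hp : ‖p‖ < 1) :
    Tendsto (qPoch a p) atTop (𝓝 (qPochInf a p)) :=
  (multipliable_one_sub_mul_pow a hp).tendsto_prod_tprod_nat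

lemma exists_norm_qPoch_le (a : ℂ) (hp : ‖p‖ < 1) : ∃ B, ∀ n, ‖qPoch a p n‖ ≤ B := by
  obtain ⟨B, hB⟩ :=
    (Metric.isBounded_range_of_tendsto _ (tendsto_qPoch a hp)).exists_norm_le
  exact ⟨B, fun n => hB _ ⟨n, rfl⟩⟩

lemma qPoch_mul_qPochInf (a : ℂ) (hp : ‖p‖ < 1) (n : ℕ) :
    qPoch a p n * qPochInf (a * p ^ n) p = qPochInf a p := by
  have tail : (fun j : ℕ => 1 - a * p ^ n * p ^ j) = fun j => 1 - a * p ^ (j + n) := by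
    funext j
    ring
  have h := multipliable_one_sub_mul_pow (a * p ^ n) hp
  rw [tail] at h
  rw [qPochInf, tail]
  exact h.prod_mul_tprod_nat_mul' (f := fun j : ℕ => 1 - a * p ^ j)

lemma qPochInf_mul_pow (hp : ‖p‖ < 1) (h : ∀ j : ℕ, a * p ^ j ≠ 1) (n : ℕ) :
    qPochInf (a * p ^ n) p = qPochInf a p / qPoch a p n :=
  eq_div_of_mul_eq (qPoch_ne_zero h n) (by rw [mul_comm, qPoch_mul_qPochInf a hp])

lemma one_sub_mul_qPochInf (a : ℂ) (hp : ‖p‖ < 1) :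
    (1 - a) * qPochInf (a * p) p = qPochInf a p := by
  simpa [qPoch] using qPoch_mul_qPochInf a hp 1

lemma qPochInf_mul_self_ne_zero (hp : ‖p‖ < 1) (h : ∀ j : ℕ, a * p ^ j ≠ 1) :
    qPochInf (a * p) p ≠ 0 := by
  have hne := qPochInf_ne_zero hp h
  rw [← one_sub_mul_qPochInf a hp] at hne
  exact right_ne_zero_of_mul hne

lemma qPochInf_neg_mul_qPochInf (a : ℂ) (hq : ‖q‖ < 1) :
    qPochInf (-a) q * qPochInf a q = qPochInf (a ^ 2) (q ^ 2) := by
  rw [qPochInf, qPochInf, qPochInf, ← (multipliable_one_sub_mul_pow (-a) hq).tprod_mul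
    (multipliable_one_sub_mul_pow a hq)]
  exact tprod_congr fun j => by ring

lemma qPochInf_even_mul_odd (a : ℂ) (hq : ‖q‖ < 1) :
    qPochInf a (q ^ 2) * qPochInf (a * q) (q ^ 2) = qPochInf a q := by
  have even : (fun j : ℕ => 1 - a * (q ^ 2) ^ j) = fun j => 1 - a * q ^ (2 * j) := by
    simp only [pow_mul]
  have odd : (fun j : ℕ => 1 - a * q * (q ^ 2) ^ j) = fun j => 1 - a * q ^ (2 * j + 1) := by
    funext j
    ring
  have hp := norm_sq_lt_one hq
  have he := multipliable_one_sub_mul_pow a hp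
  have ho := multipliable_one_sub_mul_pow (a * q) hp
  rw [even] at he
  rw [odd] at ho
  rw [qPochInf, qPochInf, even, odd]
  exact tprod_even_mul_odd (f := fun j : ℕ => 1 - a * q ^ j) he ho

lemma qPochInf_neg_mul_qPochInf_sq_eq_one (hq : ‖q‖ < 1) :
    qPochInf (-q) q * qPochInf q (q ^ 2) = 1 := by
  have hsplit := qPochInf_even_mul_odd q hq
  rw [← sq] at hsplit
  refine mul_right_cancel₀ (qPochInf_self_ne_zero (norm_sq_lt_one hq)) ?_
  rw [mul_assoc, hsplit, qPochInf_neg_mul_qPochInf q hq, one_mul]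

end Pochhammer

section BaileyTransform

variable {p : ℂ}

/-- The reciprocal `1 / (p;p)_k` of the `q`-factorial, for an integer index `k`. It vanishes for
`k < 0`, in accordance with `(p;p)_k = (p;p)_∞ / (p^{k+1};p)_∞`, so that the recurrence
`recipQPoch_sub_one` has no boundary cases. -/
noncomputable def recipQPoch (p : ℂ) (k : ℤ) : ℂ := if k < 0 then 0 else (qPoch p p k.toNat)⁻¹

lemma recipQPoch_natCast (p : ℂ) (n : ℕ) : recipQPoch p n = (qPoch p p n)⁻¹ := by
  simp [recipQPoch]

lemma recipQPoch_of_neg (p : ℂ) {k : ℤ} (hk : k < 0) : recipQPoch p k = 0 := if_pos hk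

lemma recipQPoch_sub_one (hp : ‖p‖ < 1) (k : ℤ) :
    recipQPoch p (k - 1) = (1 - p ^ k) * recipQPoch p k := by
  rcases lt_trichotomy k 0 with hk | rfl | hk
  · rw [recipQPoch_of_neg p hk, recipQPoch_of_neg p (by lia), mul_zero]
  · rw [recipQPoch_of_neg p (by lia), zpow_zero, sub_self, zero_mul]
  · obtain ⟨n, rfl⟩ : ∃ n : ℕ, k = (n + 1 : ℕ) := ⟨(k - 1).toNat, by lia⟩
    have hfactor : 1 - p * p ^ n ≠ 0 :=
      sub_ne_zero.mpr (mul_pow_ne_one_of_norm_lt_one hp hp n).symm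
    rw [Nat.cast_succ, add_sub_cancel_right, ← Nat.cast_succ, recipQPoch_natCast,
      recipQPoch_natCast, qPoch_succ, zpow_natCast, pow_succ', mul_inv_rev,
      mul_inv_cancel_left₀ hfactor]

lemma tendsto_recipQPoch (hp : ‖p‖ < 1) :
    Tendsto (recipQPoch p) atTop (𝓝 (qPochInf p p)⁻¹) := by
  rw [← Nat.map_cast_int_atTop, tendsto_map'_iff]
  simpa only [Function.comp_def, recipQPoch_natCast] using
    (tendsto_qPoch p hp).inv₀ (qPochInf_self_ne_zero hp)

lemma exists_norm_recipQPoch_le (hp : ‖p‖ < 1) : ∃ B, ∀ k, ‖recipQPoch p k‖ ≤ B := by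
  obtain ⟨B, hB⟩ := (Metric.isBounded_range_of_tendsto _
    ((tendsto_qPoch p hp).inv₀ (qPochInf_self_ne_zero hp))).exists_norm_le
  refine ⟨B, fun k => ?_⟩
  rcases lt_or_ge k 0 with hk | hk
  · rw [recipQPoch_of_neg p hk, norm_zero]
    exact (norm_nonneg _).trans (hB _ ⟨0, rfl⟩)
  · rw [recipQPoch, if_neg hk.not_gt]
    exact hB _ ⟨k.toNat, rfl⟩

/-- The bilateral Bailey transform `∑_{r ∈ ℤ} α_r / ((p;p)_{n-r} (p;p)_{m+r})`, a finite sum. On the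
diagonal `n = m` and for even `α` it is the sequence `β` for which `(α_0, 2α_1, 2α_2, …)` and `β`
form a Bailey pair relative to `1`. -/
noncomputable def baileyTransform (p : ℂ) (α : ℤ → ℂ) (n m : ℕ) : ℂ :=
  ∑' r : ℤ, α r * (recipQPoch p (n - r) * recipQPoch p (m + r))

lemma summable_baileyTransform (p : ℂ) (α : ℤ → ℂ) (n m : ℕ) :
    Summable fun r : ℤ => α r * (recipQPoch p (n - r) * recipQPoch p (m + r)) := by
  refine summable_of_hasFiniteSupport ((Set.finite_Icc (-(m : ℤ)) n).subset fun r hr => ?_)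
  contrapose! hr
  rcases lt_or_ge r (-m) with h | h
  · simp [recipQPoch_of_neg p (show (m + r : ℤ) < 0 by lia)]
  · have : (n - r : ℤ) < 0 := by
      rw [Set.mem_Icc] at hr
      lia
    simp [recipQPoch_of_neg p this]

lemma baileyTransform_zero_zero (p : ℂ) (α : ℤ → ℂ) : baileyTransform p α 0 0 = α 0 := by
  rw [baileyTransform, tsum_eq_single 0]
  · simp [recipQPoch, qPoch_zero]
  · intro r hr
    rcases hr.lt_or_gt with h | h
    · simp [recipQPoch_of_neg p h]
    · simp [recipQPoch_of_neg p (neg_lt_zero.mpr h)]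

lemma baileyTransform_comm (p : ℂ) (α : ℤ → ℂ) (n m : ℕ) :
    baileyTransform p α n m = baileyTransform p (fun r => α (-r)) m n := by
  rw [baileyTransform, baileyTransform, ← (Equiv.neg ℤ).tsum_eq]
  exact tsum_congr fun r => by
    simp only [Equiv.neg_apply, sub_neg_eq_add, ← sub_eq_add_neg, mul_comm]

lemma exists_norm_baileyTransform_le (hp : ‖p‖ < 1) {α : ℤ → ℂ} (hα : Summable α) :
    ∃ B, ∀ n m, ‖baileyTransform p α n m‖ ≤ B := by
  obtain ⟨B, hB⟩ := exists_norm_recipQPoch_le hp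
  refine ⟨(∑' r, ‖α r‖) * (B * B), fun n m => ?_⟩
  refine tsum_of_norm_bounded (hα.norm.hasSum.mul_right (B * B)) fun r => ?_
  have hB0 := (norm_nonneg _).trans (hB 0)
  rw [norm_mul, norm_mul]
  gcongr <;> exact hB _

lemma tendsto_baileyTransform_diag (hp : ‖p‖ < 1) {α : ℤ → ℂ} (hα : Summable α) :
    Tendsto (fun n => baileyTransform p α n n) atTop
      (𝓝 ((∑' r, α r) * ((qPochInf p p)⁻¹ * (qPochInf p p)⁻¹))) := by
  obtain ⟨B, hB⟩ := exists_norm_recipQPoch_le hp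
  have hB0 := (norm_nonneg _).trans (hB 0)
  rw [← tsum_mul_right]
  refine tendsto_tsum_of_dominated_convergence (hα.norm.mul_right (B * B)) (fun r => ?_)
    (.of_forall fun n r => ?_)
  · have shift (s : ℤ) : Tendsto (fun n : ℕ => (n + s : ℤ)) atTop atTop :=
      tendsto_atTop_add_const_right _ s tendsto_natCast_atTop_atTop
    exact (((tendsto_recipQPoch hp).comp (shift (-r))).mul
      ((tendsto_recipQPoch hp).comp (shift r))).const_mul (α r)
  · rw [norm_mul, norm_mul]
    gcongr <;> exact hB _

end BaileyTransform

section BaileyLemma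

variable {z p : ℂ}

lemma one_sub_mul_one_sub_inv_ne_zero (hz : z ≠ 1) : (1 - z) * (1 - z⁻¹) ≠ 0 :=
  mul_ne_zero (sub_ne_zero.mpr hz.symm) (sub_ne_zero.mpr (inv_ne_one.mpr hz).symm)

lemma mul_pow_ne_one_of_zpow (hz : ∀ r : ℤ, z * p ^ r ≠ 1) (j : ℕ) : z * p ^ j ≠ 1 := by
  simpa only [zpow_natCast] using hz j

lemma inv_mul_zpow_ne_one (hz : ∀ r : ℤ, z * p ^ r ≠ 1) (r : ℤ) : z⁻¹ * p ^ r ≠ 1 := by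
  rw [← inv_ne_one, mul_inv, inv_inv, ← zpow_neg]
  exact hz (-r)

lemma mul_zpow_ne_one_of_norm_eq_one (hz : ‖z‖ = 1) (hz1 : z ≠ 1) (hp : ‖p‖ < 1)
    (r : ℤ) : z * p ^ r ≠ 1 := by
  intro h
  have hnorm : ‖p‖ ^ r = 1 := by simpa [hz] using congrArg norm h
  obtain rfl := (zpow_eq_one_iff_right₀ (norm_nonneg p) hp.ne).mp hnorm
  exact hz1 (by simpa using h)

/-- The factor `(1 - z)(1 - z⁻¹) p^r / ((1 - z p^r)(1 - z⁻¹ p^r))` by which Bailey's lemma with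
parameters `z` and `z⁻¹` multiplies the term `α_r` of a Bailey pair relative to `1`. -/
noncomputable def baileyFactor (z p : ℂ) (r : ℤ) : ℂ :=
  (1 - z) * (1 - z⁻¹) * p ^ r / ((1 - z * p ^ r) * (1 - z⁻¹ * p ^ r))

lemma baileyFactor_zero (hz : z ≠ 1) : baileyFactor z p 0 = 1 := by
  simp only [baileyFactor, zpow_zero, mul_one]
  exact div_self (one_sub_mul_one_sub_inv_ne_zero hz)

lemma baileyFactor_even (hz0 : z ≠ 0) (hp0 : p ≠ 0) : (baileyFactor z p).Even := by
  intro r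
  have hx : p ^ r ≠ 0 := zpow_ne_zero r hp0
  have hden : (1 - z * (p ^ r)⁻¹) * (1 - z⁻¹ * (p ^ r)⁻¹) =
      (1 - z * p ^ r) * (1 - z⁻¹ * p ^ r) / (p ^ r * p ^ r) := by
    field_simp
    ring
  rw [baileyFactor, baileyFactor, zpow_neg, hden, div_div_eq_mul_div]
  congr 1
  field_simp

lemma exists_norm_baileyFactor_le (hz0 : z ≠ 0) (hp0 : p ≠ 0) (hp : ‖p‖ < 1) :
    ∃ B, ∀ r, ‖baileyFactor z p r‖ ≤ B := by
  have hpow := tendsto_pow_atTop_nhds_zero_of_norm_lt_one hp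
  have hlim : Tendsto (fun n : ℕ => baileyFactor z p n) atTop (𝓝 0) := by
    simp only [baileyFactor, zpow_natCast]
    have hden := ((hpow.const_mul z).const_sub 1).mul ((hpow.const_mul z⁻¹).const_sub 1)
    simpa [Pi.div_def] using (hpow.const_mul ((1 - z) * (1 - z⁻¹))).div hden (by simp)
  obtain ⟨B, hB⟩ := (Metric.isBounded_range_of_tendsto _ hlim).exists_norm_le
  refine ⟨B, fun r => ?_⟩
  obtain ⟨n, rfl | rfl⟩ := r.eq_nat_or_neg
  · exact hB _ ⟨n, rfl⟩
  · rw [baileyFactor_even hz0 hp0]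
    exact hB _ ⟨n, rfl⟩

lemma summable_mul_baileyFactor (hz0 : z ≠ 0) (hp0 : p ≠ 0) (hp : ‖p‖ < 1) {α : ℤ → ℂ}
    (hα : Summable α) : Summable fun r => α r * baileyFactor z p r := by
  obtain ⟨B, hB⟩ := exists_norm_baileyFactor_le hz0 hp0 hp
  refine .of_norm_bounded (hα.norm.mul_right B) fun r => ?_
  rw [norm_mul]
  gcongr
  exact hB r

lemma baileyFactor_mul_sub (hz0 : z ≠ 0) (hp0 : p ≠ 0) (hz : ∀ r : ℤ, z * p ^ r ≠ 1)
    (n r : ℤ) :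
    baileyFactor z p r *
        ((1 - z * p ^ n) * (1 - z⁻¹ * p ^ n) - (1 - p ^ (n - r)) * (1 - p ^ (n + r))) =
      (1 - z) * (1 - z⁻¹) * p ^ n := by
  have hden : (1 - z * p ^ r) * (1 - z⁻¹ * p ^ r) ≠ 0 :=
    mul_ne_zero (sub_ne_zero.mpr (hz r).symm)
      (sub_ne_zero.mpr (inv_mul_zpow_ne_one hz r).symm)
  have hx : p ^ r ≠ 0 := zpow_ne_zero r hp0
  have hdiff : (1 - z * p ^ n) * (1 - z⁻¹ * p ^ n) - (1 - p ^ (n - r)) * (1 - p ^ (n + r)) =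
      p ^ n / p ^ r * ((1 - z * p ^ r) * (1 - z⁻¹ * p ^ r)) := by
    rw [zpow_sub₀ hp0, zpow_add₀ hp0]
    field_simp
    ring
  rw [hdiff, baileyFactor]
  generalize (1 - z * p ^ r) * (1 - z⁻¹ * p ^ r) = D at hden ⊢
  field_simp

lemma baileyTransform_mul_baileyFactor_succ (hz0 : z ≠ 0) (hp0 : p ≠ 0) (hp : ‖p‖ < 1)
    (hz : ∀ r : ℤ, z * p ^ r ≠ 1) (α : ℤ → ℂ) (n : ℕ) :
    (1 - z * p ^ (n + 1)) * (1 - z⁻¹ * p ^ (n + 1)) *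
        baileyTransform p (fun r => α r * baileyFactor z p r) (n + 1) (n + 1) =
      baileyTransform p (fun r => α r * baileyFactor z p r) n n +
        (1 - z) * (1 - z⁻¹) * p ^ (n + 1) * baileyTransform p α (n + 1) (n + 1) := by
  simp only [baileyTransform, ← tsum_mul_left]
  rw [← (summable_baileyTransform _ _ _ _).tsum_add
    ((summable_baileyTransform _ _ _ _).mul_left _)]
  refine tsum_congr fun r => ?_
  have hminus := recipQPoch_sub_one hp ((n + 1 : ℕ) - r)
  have hplus := recipQPoch_sub_one hp ((n + 1 : ℕ) + r)
  rw [show ((n + 1 : ℕ) : ℤ) - r - 1 = n - r by push_cast; ring] at hminus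
  rw [show ((n + 1 : ℕ) : ℤ) + r - 1 = n + r by push_cast; ring] at hplus
  have hfactor := baileyFactor_mul_sub hz0 hp0 hz (n + 1 : ℕ) r
  rw [zpow_natCast] at hfactor
  rw [hminus, hplus]
  linear_combination
    (α r * recipQPoch p ((n + 1 : ℕ) - r) * recipQPoch p ((n + 1 : ℕ) + r)) * hfactor

lemma sum_range_qPoch_mul_baileyTransform (hz0 : z ≠ 0) (hp0 : p ≠ 0) (hp : ‖p‖ < 1)
    (hz : ∀ r : ℤ, z * p ^ r ≠ 1) (α : ℤ → ℂ) (N : ℕ) :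
    ∑ n ∈ Finset.range (N + 1), qPoch z p n * qPoch z⁻¹ p n * p ^ n * baileyTransform p α n n =
      qPoch (z * p) p N * qPoch (z⁻¹ * p) p N *
        baileyTransform p (fun r => α r * baileyFactor z p r) N N := by
  induction N with
  | zero =>
    have hz1 : z ≠ 1 := by simpa using hz 0
    simp [qPoch_zero, baileyTransform_zero_zero, baileyFactor_zero hz1]
  | succ N ih =>
    rw [Finset.sum_range_succ, ih, qPoch_succ' z, qPoch_succ' z⁻¹, qPoch_succ, qPoch_succ]
    linear_combination -(qPoch (z * p) p N * qPoch (z⁻¹ * p) p N) *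
      baileyTransform_mul_baileyFactor_succ hz0 hp0 hp hz α N

lemma summable_qPoch_mul_baileyTransform (z : ℂ) (hp : ‖p‖ < 1) {α : ℤ → ℂ}
    (hα : Summable α) :
    Summable fun n : ℕ => qPoch z p n * qPoch z⁻¹ p n * p ^ n * baileyTransform p α n n := by
  obtain ⟨B, hB⟩ := exists_norm_qPoch_le z hp
  obtain ⟨B', hB'⟩ := exists_norm_qPoch_le z⁻¹ hp
  obtain ⟨C, hC⟩ := exists_norm_baileyTransform_le hp hα
  have hB0 := (norm_nonneg _).trans (hB 0)
  have hB'0 := (norm_nonneg _).trans (hB' 0)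
  refine .of_norm_bounded (((summable_geometric_of_lt_one (norm_nonneg p) hp).mul_left
    (B * B')).mul_right C) fun n => ?_
  rw [norm_mul, norm_mul, norm_mul, norm_pow]
  gcongr
  exacts [hB n, hB' n, hC n n]

theorem bailey_lemma (hz0 : z ≠ 0) (hp0 : p ≠ 0) (hp : ‖p‖ < 1)
    (hz : ∀ r : ℤ, z * p ^ r ≠ 1) {α : ℤ → ℂ} (hα : Summable α) :
    ∑' n : ℕ, qPoch z p n * qPoch z⁻¹ p n * p ^ n * baileyTransform p α n n =
      qPochInf (z * p) p * qPochInf (z⁻¹ * p) p *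
        ((∑' r, α r * baileyFactor z p r) * ((qPochInf p p)⁻¹ * (qPochInf p p)⁻¹)) := by
  have hsum := (tendsto_add_atTop_iff_nat 1).mpr
    (summable_qPoch_mul_baileyTransform z hp hα).hasSum.tendsto_sum_nat
  simp only [sum_range_qPoch_mul_baileyTransform hz0 hp0 hp hz] at hsum
  exact tendsto_nhds_unique hsum
    (((tendsto_qPoch (z * p) hp).mul (tendsto_qPoch (z⁻¹ * p) hp)).mul
      (tendsto_baileyTransform_diag hp (summable_mul_baileyFactor hz0 hp0 hp hα)))

end BaileyLemma

section JacobiTripleProduct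

variable {q w : ℂ}

/-- The general term `(-w)^r q^{r²}` of the theta series in the Jacobi triple product. -/
noncomputable def thetaTerm (q w : ℂ) (r : ℤ) : ℂ := (-w) ^ r * q ^ (r ^ 2)

lemma thetaTerm_neg (q w : ℂ) (r : ℤ) : thetaTerm q w (-r) = thetaTerm q w⁻¹ r := by
  rw [thetaTerm, thetaTerm, neg_sq, zpow_neg, ← inv_zpow, inv_neg]

lemma thetaTerm_one_even (q : ℂ) : (thetaTerm q 1).Even := fun r => by
  rw [thetaTerm_neg, inv_one]

lemma thetaTerm_sub_one (hq0 : q ≠ 0) (hw : w ≠ 0) (r : ℤ) :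
    thetaTerm q w r = -(w * q ^ (2 * r - 1)) * thetaTerm q w (r - 1) := by
  have hsq : q ^ (r ^ 2) = q ^ (2 * r - 1) * q ^ ((r - 1) ^ 2) := by
    rw [← zpow_add₀ hq0]
    ring_nf
  have hneg : (-w) ^ r = -w * (-w) ^ (r - 1) := by
    rw [← zpow_one_add₀ (neg_ne_zero.mpr hw), add_sub_cancel]
  rw [thetaTerm, thetaTerm, hsq, hneg]
  ring

lemma summable_thetaTerm_one (hq : ‖q‖ < 1) : Summable (thetaTerm q 1) := by
  have hnat : Summable fun n : ℕ => thetaTerm q 1 n := by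
    refine .of_norm_bounded (summable_geometric_of_lt_one (norm_nonneg q) hq) fun n => ?_
    have hsq : q ^ ((n : ℤ) ^ 2) = q ^ (n ^ 2) := by
      rw [← Nat.cast_pow, zpow_natCast]
    rw [thetaTerm, hsq, norm_mul, norm_pow]
    simpa using pow_le_pow_of_le_one (norm_nonneg q) hq.le (Nat.le_self_pow two_ne_zero n)
  exact .of_nat_of_neg hnat (by simpa only [thetaTerm_one_even q _] using hnat)

lemma one_sub_mul_thetaTerm_mul_recipQPoch (hq0 : q ≠ 0) (hq : ‖q‖ < 1) (hw : w ≠ 0) (n m r : ℤ) :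
    (1 - (q ^ 2) ^ (n + m + 1)) *
        (thetaTerm q w r * (recipQPoch (q ^ 2) (n + 1 - r) * recipQPoch (q ^ 2) (m + r))) =
      thetaTerm q w r * (recipQPoch (q ^ 2) (n - r) * recipQPoch (q ^ 2) (m + r)) -
        w * q * (q ^ 2) ^ n * (thetaTerm q w (r - 1) *
          (recipQPoch (q ^ 2) (n - (r - 1)) * recipQPoch (q ^ 2) (m + (r - 1)))) := by
  have hleft := recipQPoch_sub_one (norm_sq_lt_one hq) (n + 1 - r)
  have hright := recipQPoch_sub_one (norm_sq_lt_one hq) (m + r)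
  have hpow : (q ^ 2) ^ (n + m + 1) = (q ^ 2) ^ (n + 1 - r) * (q ^ 2) ^ (m + r) := by
    rw [← zpow_add₀ (pow_ne_zero 2 hq0)]
    ring_nf
  have hpow' : q * (q ^ 2) ^ n = (q ^ 2) ^ (n + 1 - r) * q ^ (2 * r - 1) := by
    rw [← zpow_natCast q 2, ← zpow_mul, ← zpow_mul, ← zpow_one_add₀ hq0, ← zpow_add₀ hq0]
    congr 1
    push_cast
    ring
  rw [show n + 1 - r - 1 = n - r by ring] at hleft
  rw [show n - (r - 1) = n + 1 - r by ring, ← add_sub_assoc, hleft, hright, mul_assoc w, hpow,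
    hpow', thetaTerm_sub_one hq0 hw r]
  ring

lemma baileyTransform_thetaTerm_succ_left (hq0 : q ≠ 0) (hq : ‖q‖ < 1) (hw : w ≠ 0) (n m : ℕ) :
    (1 - (q ^ 2) ^ (n + m + 1)) * baileyTransform (q ^ 2) (thetaTerm q w) (n + 1) m =
      (1 - w * q * (q ^ 2) ^ n) * baileyTransform (q ^ 2) (thetaTerm q w) n m := by
  set f : ℤ → ℂ := fun r =>
    thetaTerm q w r * (recipQPoch (q ^ 2) (n - r) * recipQPoch (q ^ 2) (m + r))
  have hs : Summable f := summable_baileyTransform _ _ _ _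
  have hs' : Summable fun r : ℤ => f (r - 1) := (Equiv.subRight (1 : ℤ)).summable_iff.mpr hs
  have hshift : ∑' r, f (r - 1) = ∑' r, f r := (Equiv.subRight (1 : ℤ)).tsum_eq f
  have hterm (r : ℤ) : (1 - (q ^ 2) ^ (n + m + 1)) * (thetaTerm q w r *
      (recipQPoch (q ^ 2) ((n + 1 : ℕ) - r) * recipQPoch (q ^ 2) (m + r))) =
        f r - w * q * (q ^ 2) ^ n * f (r - 1) :=
    mod_cast one_sub_mul_thetaTerm_mul_recipQPoch hq0 hq hw n m r
  rw [baileyTransform, ← tsum_mul_left, tsum_congr hterm, hs.tsum_sub (hs'.mul_left _),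
    tsum_mul_left, hshift, baileyTransform]
  ring

lemma baileyTransform_thetaTerm_succ_right (hq0 : q ≠ 0) (hq : ‖q‖ < 1) (hw : w ≠ 0) (n m : ℕ) :
    (1 - (q ^ 2) ^ (n + m + 1)) * baileyTransform (q ^ 2) (thetaTerm q w) n (m + 1) =
      (1 - w⁻¹ * q * (q ^ 2) ^ m) * baileyTransform (q ^ 2) (thetaTerm q w) n m := by
  rw [baileyTransform_comm, baileyTransform_comm (n := n)]
  simp only [thetaTerm_neg]
  rw [add_comm n m]
  exact baileyTransform_thetaTerm_succ_left hq0 hq (inv_ne_zero hw) m n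

theorem finite_jacobi_triple_product (hq0 : q ≠ 0) (hq : ‖q‖ < 1) (hw : w ≠ 0) (n m : ℕ) :
    qPoch (q ^ 2) (q ^ 2) (n + m) * baileyTransform (q ^ 2) (thetaTerm q w) n m =
      qPoch (w * q) (q ^ 2) n * qPoch (w⁻¹ * q) (q ^ 2) m := by
  induction n with
  | zero =>
    induction m with
    | zero => simp [baileyTransform_zero_zero, qPoch_zero, thetaTerm]
    | succ m ih =>
      rw [← add_assoc, qPoch_succ, qPoch_succ, ← pow_succ']
      linear_combination qPoch (q ^ 2) (q ^ 2) (0 + m) *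
        baileyTransform_thetaTerm_succ_right hq0 hq hw 0 m + (1 - w⁻¹ * q * (q ^ 2) ^ m) * ih
  | succ n ih =>
    rw [add_right_comm, qPoch_succ, qPoch_succ, ← pow_succ']
    linear_combination qPoch (q ^ 2) (q ^ 2) (n + m) *
      baileyTransform_thetaTerm_succ_left hq0 hq hw n m + (1 - w * q * (q ^ 2) ^ n) * ih

lemma baileyTransform_thetaTerm_one (hq0 : q ≠ 0) (hq : ‖q‖ < 1) (n : ℕ) :
    baileyTransform (q ^ 2) (thetaTerm q 1) n n =
      qPoch q (q ^ 2) n ^ 2 / qPoch (q ^ 2) (q ^ 2) (2 * n) := by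
  have hp := norm_sq_lt_one hq
  rw [eq_div_iff (qPoch_ne_zero (mul_pow_ne_one_of_norm_lt_one hp hp) _), mul_comm, two_mul,
    finite_jacobi_triple_product hq0 hq one_ne_zero, inv_one, one_mul, ← sq]

end JacobiTripleProduct

section RankAndCrank

variable {z q : ℂ}

/-- The summand `(z;q²)_n (z⁻¹;q²)_n q^{2n} β_n` of the left-hand side of Bailey's lemma for the
Bailey pair with `α_r = (-1)^r q^{r²}`. The series of these summands is `R2 / C2`, and the sum over
`n ≥ 1` is `(1 - z)(1 - z⁻¹) SB / C2`. -/
noncomputable def rankCrankTerm (z q : ℂ) (n : ℕ) : ℂ :=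
  qPoch z (q ^ 2) n * qPoch z⁻¹ (q ^ 2) n * (q ^ 2) ^ n *
    baileyTransform (q ^ 2) (thetaTerm q 1) n n

lemma rankCrankTerm_zero (z q : ℂ) : rankCrankTerm z q 0 = 1 := by
  simp [rankCrankTerm, qPoch_zero, baileyTransform_zero_zero, thetaTerm]

lemma summable_rankCrankTerm (z : ℂ) (hq : ‖q‖ < 1) : Summable (rankCrankTerm z q) :=
  summable_qPoch_mul_baileyTransform z (norm_sq_lt_one hq) (summable_thetaTerm_one hq)

lemma C2_eq (z : ℂ) (hq : ‖q‖ < 1) :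
    C2 z q = qPochInf (q ^ 2) (q ^ 2) /
      (qPochInf q (q ^ 2) ^ 2 *
        (qPochInf (z * q ^ 2) (q ^ 2) * qPochInf (z⁻¹ * q ^ 2) (q ^ 2))) := by
  rw [C2, eq_inv_of_mul_eq_one_left (qPochInf_neg_mul_qPochInf_sq_eq_one hq)]
  field_simp

lemma C2_eq_one_sub_mul (hq : ‖q‖ < 1) (hz1 : z ≠ 1) :
    C2 z q = (1 - z) * (1 - z⁻¹) * (qPochInf (q ^ 2) (q ^ 2) /
      (qPochInf q (q ^ 2) ^ 2 * (qPochInf z (q ^ 2) * qPochInf z⁻¹ (q ^ 2)))) := by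
  have hp := norm_sq_lt_one hq
  rw [C2_eq z hq, ← one_sub_mul_qPochInf z hp, ← one_sub_mul_qPochInf z⁻¹ hp,
    mul_mul_mul_comm (1 - z), mul_left_comm (_ ^ 2) ((1 - z) * (1 - z⁻¹)), ← mul_div_assoc,
    mul_div_mul_left _ _ (one_sub_mul_one_sub_inv_ne_zero hz1)]

lemma R2_eq_tsum_int (hq0 : q ≠ 0) (hq : ‖q‖ < 1) (hz0 : z ≠ 0) (hz1 : z ≠ 1) :
    R2 z q = qPochInf (-q) q / qPochInf q q *
      ∑' r, thetaTerm q 1 r * baileyFactor z (q ^ 2) r := by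
  have hp0 : q ^ 2 ≠ 0 := pow_ne_zero 2 hq0
  have heven : (fun r => thetaTerm q 1 r * baileyFactor z (q ^ 2) r).Even := fun r => by
    simp only [thetaTerm_one_even q r, baileyFactor_even hz0 hp0 r]
  have hterm (n : ℕ) : thetaTerm q 1 (n + 1 : ℕ) * baileyFactor z (q ^ 2) (n + 1 : ℕ) =
      (1 - z) * (1 - z⁻¹) * (-1) ^ (n + 1) * q ^ ((n + 1) ^ 2 + 2 * (n + 1)) /
        ((1 - z * q ^ (2 * (n + 1))) * (1 - z⁻¹ * q ^ (2 * (n + 1)))) := by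
    rw [thetaTerm, baileyFactor, ← Nat.cast_pow]
    simp only [zpow_natCast, ← pow_mul]
    rw [pow_add q]
    ring
  rw [tsum_int_eq_zero_add_two_mul_tsum_pnat heven
      (summable_mul_baileyFactor hz0 hp0 (norm_sq_lt_one hq) (summable_thetaTerm_one hq)),
    tsum_pnat_eq_tsum_succ
      (f := fun n : ℕ => thetaTerm q 1 n * baileyFactor z (q ^ 2) n),
    tsum_congr hterm, baileyFactor_zero hz1, R2]
  simp [thetaTerm]

lemma R2_eq_C2_mul_tsum (hq0 : q ≠ 0) (hq : ‖q‖ < 1) (hz0 : z ≠ 0)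
    (hz : ∀ r : ℤ, z * (q ^ 2) ^ r ≠ 1) :
    R2 z q = C2 z q * ∑' n, rankCrankTerm z q n := by
  have hp := norm_sq_lt_one hq
  have hz1 : z ≠ 1 := by simpa using hz 0
  have hP := qPochInf_self_ne_zero hp
  have hA := qPochInf_mul_self_ne_zero hp (mul_pow_ne_one_of_zpow hz)
  have hB := qPochInf_mul_self_ne_zero hp (mul_pow_ne_one_of_zpow (inv_mul_zpow_ne_one hz))
  simp only [rankCrankTerm]
  rw [bailey_lemma hz0 (pow_ne_zero 2 hq0) hp hz (summable_thetaTerm_one hq),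
    R2_eq_tsum_int hq0 hq hz0 hz1, C2_eq z hq, ← qPochInf_even_mul_odd q hq, ← sq,
    eq_inv_of_mul_eq_one_left (qPochInf_neg_mul_qPochInf_sq_eq_one hq)]
  generalize qPochInf (z * q ^ 2) (q ^ 2) = A at hA ⊢
  generalize qPochInf (z⁻¹ * q ^ 2) (q ^ 2) = B at hB ⊢
  field_simp

lemma SB_summand_eq (hq0 : q ≠ 0) (hq : ‖q‖ < 1) (hz : ∀ r : ℤ, z * (q ^ 2) ^ r ≠ 1) (n : ℕ) :
    (1 - z) * (1 - z⁻¹) *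
      (q ^ (2 * n) * qPochInf (-q ^ (2 * n + 1)) q * qPochInf (q ^ (2 * n + 1)) q /
        (qPochInf (z * q ^ (2 * n)) (q ^ 2) * qPochInf (z⁻¹ * q ^ (2 * n)) (q ^ 2) *
          qPochInf (q ^ (2 * n + 1)) (q ^ 2) ^ 2)) =
      C2 z q * rankCrankTerm z q n := by
  have hp := norm_sq_lt_one hq
  have hz1 : z ≠ 1 := by simpa using hz 0
  have hnum : qPochInf (-q ^ (2 * n + 1)) q * qPochInf (q ^ (2 * n + 1)) q =
      qPochInf (q ^ 2) (q ^ 2) / qPoch (q ^ 2) (q ^ 2) (2 * n) := by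
    rw [qPochInf_neg_mul_qPochInf _ hq,
      ← qPochInf_mul_pow hp (mul_pow_ne_one_of_norm_lt_one hp hp)]
    ring_nf
  rw [C2_eq_one_sub_mul hq hz1, rankCrankTerm, baileyTransform_thetaTerm_one hq0 hq,
    mul_assoc (q ^ (2 * n)), hnum, pow_succ' q (2 * n), pow_mul q 2 n,
    qPochInf_mul_pow hp (mul_pow_ne_one_of_zpow hz),
    qPochInf_mul_pow hp (mul_pow_ne_one_of_zpow (inv_mul_zpow_ne_one hz)),
    qPochInf_mul_pow hp (mul_pow_ne_one_of_norm_lt_one hq hp)]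
  simp only [div_eq_mul_inv, mul_inv, mul_pow, inv_pow, inv_inv]
  ring

lemma SB_eq_C2_mul_tsum (hq0 : q ≠ 0) (hq : ‖q‖ < 1) (hz : ∀ r : ℤ, z * (q ^ 2) ^ r ≠ 1) :
    (1 - z) * (1 - z⁻¹) * SB z q = C2 z q * (∑' n, rankCrankTerm z q n - 1) := by
  rw [(summable_rankCrankTerm z hq).tsum_eq_zero_add, rankCrankTerm_zero, add_sub_cancel_left, SB,
    ← tsum_mul_left, ← tsum_mul_left]
  exact tsum_congr fun n => SB_summand_eq hq0 hq hz (n + 1)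

end RankAndCrank

theorem SB_eq_rank_minus_crank_general (q z : ℂ) (hq : ‖q‖ < 1) (hz0 : z ≠ 0)
    (hz : ∀ r : ℤ, z * (q ^ 2) ^ r ≠ 1) :
    SB z q = (R2 z q - C2 z q) / ((1 - z) * (1 - z⁻¹)) := by
  rcases eq_or_ne q 0 with rfl | hq0
  · simp [SB, R2, C2, qPochInf]
  have hz1 : z ≠ 1 := by simpa using hz 0
  rw [eq_div_iff (one_sub_mul_one_sub_inv_ne_zero hz1), mul_comm, SB_eq_C2_mul_tsum hq0 hq hz,
    R2_eq_C2_mul_tsum hq0 hq hz0 hz]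
  ring

/-- `S̄B(z,q) = (R2(z,q) - C2(z,q)) / ((1-z)(1-z⁻¹))` for `z` a root of unity, `z ≠ 1`. -/
theorem SB_eq_rank_minus_crank (q z : ℂ) (hq : ‖q‖ < 1)
    (hz : ∃ k : ℕ, 0 < k ∧ z ^ k = 1) (hz1 : z ≠ 1) :
    SB z q = (R2 z q - C2 z q) / ((1 - z) * (1 - z⁻¹)) := by
  obtain ⟨k, hk, hzk⟩ := hz
  have hnorm : ‖z‖ = 1 := Complex.norm_eq_one_of_pow_eq_one hzk hk.ne'
  exact SB_eq_rank_minus_crank_general q z hq (norm_ne_zero_iff.mp (hnorm ▸ one_ne_zero))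
    (mul_zpow_ne_one_of_norm_eq_one hnorm hz1 (norm_sq_lt_one hq))
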